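/- Let H be a real Hilbert space, let 0 < c₁ < ∞, let λ ∈ (0,∞) with λ ∉ {c₁, √2·c₁}, let s ∈ {−1,1}, let J be a unitary operator on H, and let n ∈ H be a unit vector. If a vector w ∈ M(H) satisfies W_{λ,c₁}[s,n,J] w = W_{λ,∞}[s,n,J] w, then T(w) = 0 and ⟨n,w⟩ = 0. -/

import Mathlib

/-!
Put `u = λ² / c²`, `γ = √|1 - u|`, `t = T(w)` and `x = ⟨n, w⟩`. Comparing the two images along `n`
gives `(λt - sx) / γ = λt - sx`. Since `u ∉ {0, 2}` we have `γ ≠ 1`, so `sx = λt`. The time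
components then read `(1 - u) t = γ t`, and `γ = 1 - u` would force `1 - u ∈ {0, 1}`; hence `t = 0`.
-/

open scoped InnerProductSpace

/-- Generalized Lorentz transform `W_{λ,c}[s,n,J]` on `M(H) = ℝ × H` (case `λ < ∞`, `c < ∞`). -/
noncomputable def Wfin {H : Type*} [NormedAddCommGroup H] [InnerProductSpace ℝ H]
    (lam c s : ℝ) (n : H) (J : H ≃ₗᵢ[ℝ] H) (w : ℝ × H) : ℝ × H :=
  ((s * w.1 - lam / c ^ 2 * ⟪n, w.2⟫_ℝ) / Real.sqrt |1 - lam ^ 2 / c ^ 2|,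
    J (((lam * w.1 - s * ⟪n, w.2⟫_ℝ) / Real.sqrt |1 - lam ^ 2 / c ^ 2|) • n
      + (w.2 - ⟪n, w.2⟫_ℝ • n)))

/-- Generalized Lorentz transform `W_{λ,∞}[s,n,J]` on `M(H) = ℝ × H` (case `c = ∞`). -/
noncomputable def Wgal {H : Type*} [NormedAddCommGroup H] [InnerProductSpace ℝ H]
    (lam s : ℝ) (n : H) (J : H ≃ₗᵢ[ℝ] H) (w : ℝ × H) : ℝ × H :=
  (s * w.1, J ((lam * w.1 - s * ⟪n, w.2⟫_ℝ) • n + (w.2 - ⟪n, w.2⟫_ℝ • n)))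

/-- Generalized Lorentz transform `W_{∞,c}[s,n,J]` on `M(H) = ℝ × H` (case `λ = ∞`). -/
noncomputable def Wtach {H : Type*} [NormedAddCommGroup H] [InnerProductSpace ℝ H]
    (c s : ℝ) (n : H) (J : H ≃ₗᵢ[ℝ] H) (w : ℝ × H) : ℝ × H :=
  (-⟪n, w.2⟫_ℝ / c, J ((c * w.1) • n + (w.2 - ⟪n, w.2⟫_ℝ • n)))

theorem sqrt_abs_eq_self_iff {a : ℝ} : √|a| = a ↔ a = 0 ∨ a = 1 := by
  constructor
  · intro h
    have ha : 0 ≤ a := h ▸ Real.sqrt_nonneg _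
    rw [abs_of_nonneg ha, Real.sqrt_eq_iff_mul_self_eq ha ha] at h
    exact IsIdempotentElem.iff_eq_zero_or_one.1 h.symm
  · rintro (rfl | rfl) <;> simp

theorem sqrt_abs_one_sub_eq_one_iff {u : ℝ} : √|1 - u| = 1 ↔ u = 0 ∨ u = 2 := by
  rw [Real.sqrt_eq_one, abs_eq zero_le_one]
  refine or_congr ⟨?_, ?_⟩ ⟨?_, ?_⟩ <;> intro h <;> linarith

theorem eq_zero_and_eq_zero_of_boost_eq {R : Type*} [CommRing R] [NoZeroDivisors R]
    {l v s g t x : R} (hs : s * s = 1) (hg : g ≠ 1) (hgv : g ≠ 1 - l * v)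
    (htime : s * t - v * x = s * t * g) (hspace : l * t - s * x = (l * t - s * x) * g) :
    t = 0 ∧ x = 0 := by
  have hsx : l * t - s * x = 0 :=
    (mul_eq_zero.1 (by linear_combination hspace)).resolve_right (sub_ne_zero.2 hg.symm)
  have hx : x = s * l * t := by linear_combination (-x) * hs - s * hsx
  have ht : t * (1 - l * v - g) = 0 := by
    subst hx
    linear_combination s * htime - (t - t * v * l - t * g) * hs
  have ht0 : t = 0 := (mul_eq_zero.1 ht).resolve_right (sub_ne_zero.2 hgv.symm)
  exact ⟨ht0, by rw [hx, ht0, mul_zero]⟩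

section LorentzTransform

variable {H : Type*} [NormedAddCommGroup H] [InnerProductSpace ℝ H] {lam c s : ℝ} {n : H}
  {J : H ≃ₗᵢ[ℝ] H} {w : ℝ × H}

theorem wfin_eq_wgal_iff (hn : n ≠ 0) :
    Wfin lam c s n J w = Wgal lam s n J w ↔
      (s * w.1 - lam / c ^ 2 * ⟪n, w.2⟫_ℝ) / √|1 - lam ^ 2 / c ^ 2| = s * w.1 ∧
      (lam * w.1 - s * ⟪n, w.2⟫_ℝ) / √|1 - lam ^ 2 / c ^ 2| = lam * w.1 - s * ⟪n, w.2⟫_ℝ := by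
  simp only [Wfin, Wgal, Prod.mk.injEq, EmbeddingLike.apply_eq_iff_eq, add_left_inj,
    (smul_left_injective ℝ hn).eq_iff]

theorem stmt9_general (hc : c ≠ 0) (hlam : lam ≠ 0) (hlc : lam ^ 2 ≠ c ^ 2)
    (hlc₂ : lam ^ 2 ≠ 2 * c ^ 2) (hs : s = 1 ∨ s = -1) (hn : n ≠ 0)
    (hw : Wfin lam c s n J w = Wgal lam s n J w) :
    w.1 = 0 ∧ ⟪n, w.2⟫_ℝ = 0 := by
  have hc₂ : c ^ 2 ≠ 0 := pow_ne_zero 2 hc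
  have hu₀ : lam ^ 2 / c ^ 2 ≠ 0 := div_ne_zero (pow_ne_zero 2 hlam) hc₂
  have hu₁ : 1 - lam ^ 2 / c ^ 2 ≠ 0 := sub_ne_zero.2 (mt (div_eq_one_iff_eq hc₂).1 hlc ∘ Eq.symm)
  have hu₂ : lam ^ 2 / c ^ 2 ≠ 2 := mt (div_eq_iff hc₂).1 hlc₂
  have hγ₀ : √|1 - lam ^ 2 / c ^ 2| ≠ 0 := (Real.sqrt_pos.2 (abs_pos.2 hu₁)).ne'
  have hγ₁ : √|1 - lam ^ 2 / c ^ 2| ≠ 1 :=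
    mt sqrt_abs_one_sub_eq_one_iff.1 (not_or.2 ⟨hu₀, hu₂⟩)
  have hγu : √|1 - lam ^ 2 / c ^ 2| ≠ 1 - lam * (lam / c ^ 2) := by
    rw [← mul_div_assoc, ← sq, ne_eq, sqrt_abs_eq_self_iff, sub_eq_self]
    exact not_or.2 ⟨hu₁, hu₀⟩
  obtain ⟨htime, hspace⟩ := (wfin_eq_wgal_iff hn).1 hw
  exact eq_zero_and_eq_zero_of_boost_eq (mul_self_eq_one_iff.2 hs) hγ₁ hγu
    ((div_eq_iff hγ₀).1 htime) ((div_eq_iff hγ₀).1 hspace)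

end LorentzTransform

/-- Lemma, case `c₂ = ∞`: if `0 < c₁ < ∞`, `λ ∈ (0,∞)`,
`λ ∉ {c₁, √2·c₁}`, and `W_{λ,c₁}[s,n,J] w = W_{λ,∞}[s,n,J] w`, then
`T(w) = 0` and `⟨n,w⟩ = 0`. -/
theorem stmt9 {H : Type*} [NormedAddCommGroup H] [InnerProductSpace ℝ H] [CompleteSpace H]
    (c₁ : ℝ) (hc₁ : 0 < c₁)
    (lam : ℝ) (hlam : 0 < lam) (hl₁ : lam ≠ c₁) (hl₂ : lam ≠ Real.sqrt 2 * c₁)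
    (s : ℝ) (hs : s = 1 ∨ s = -1) (J : H ≃ₗᵢ[ℝ] H) (n : H) (hn : ‖n‖ = 1)
    (w : ℝ × H) (hw : Wfin lam c₁ s n J w = Wgal lam s n J w) :
    w.1 = 0 ∧ ⟪n, w.2⟫_ℝ = 0 :=
  stmt9_general hc₁.ne' hlam.ne' (mt (sq_eq_sq₀ hlam.le hc₁.le).1 hl₁)
    (fun h ↦ hl₂ <| (sq_eq_sq₀ hlam.le (by positivity)).1 <| by simpa [mul_pow] using h)
    hs (norm_ne_zero_iff.1 (hn ▸ one_ne_zero)) hw
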